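/- Let (τ_i)_{1≤i≤σ_n} be independent critical geometric Galton–Watson trees, with σ_n = o(√n), and let i_* be the (smallest) index of a tree of maximal size. Then the total variation distance between the conditional law of the family (τ_i)_{i≠i_*} given Σ_{i=1}^{σ_n}|τ_i| = n, and the law of σ_n − 1 independent (unconditioned) critical geometric Galton–Watson trees, tends to 0 as n → ∞. -/

import Mathlib

open scoped ENNReal Classical
open Filter

/-- Finite rooted plane trees. -/
inductive PTree : Type
  | node : List PTree → PTree

mutual
  /-- The number of edges of a plane tree. -/
  def PTree.edges : PTree → ℕ
    | .node ts => ts.length + PTree.edgesList ts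
  /-- The total number of edges of a list of plane trees. -/
  def PTree.edgesList : List PTree → ℕ
    | [] => 0
    | t :: ts => PTree.edges t + PTree.edgesList ts
end

mutual
  /-- The law of the critical geometric Galton–Watson tree: `P(τ = t) = ∏_v 2^{-c(v)-1}`. -/
  noncomputable def gwProb : PTree → ℝ≥0∞
    | .node ts => (2 : ℝ≥0∞)⁻¹ ^ (ts.length + 1) * gwProbList ts
  /-- Product of `gwProb` over a list of trees. -/
  noncomputable def gwProbList : List PTree → ℝ≥0∞
    | [] => 1
    | t :: ts => gwProb t * gwProbList ts
end

/-- Mass of a forest of `m` independent critical geometric Galton–Watson trees. -/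
noncomputable def forestMass {m : ℕ} (f : Fin m → PTree) : ℝ≥0∞ :=
  ∏ i, gwProb (f i)

/-- The smallest index of a tree of maximal size in a forest. -/
noncomputable def istar {m : ℕ} (f : Fin (m + 1) → PTree) : Fin (m + 1) :=
  (Finset.univ.filter fun i => ∀ j, (f j).edges ≤ (f i).edges).min'
    (by
      obtain ⟨b, -, hb⟩ :=
        Finset.exists_max_image (Finset.univ : Finset (Fin (m + 1)))
          (fun i => (f i).edges) ⟨0, Finset.mem_univ 0⟩
      exact ⟨b, Finset.mem_filter.mpr ⟨Finset.mem_univ _, fun j => hb j (Finset.mem_univ j)⟩⟩)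

/-- Remove the coordinate `i` from a forest. -/
def removeAt {m : ℕ} (i : Fin (m + 1)) (f : Fin (m + 1) → PTree) : Fin m → PTree :=
  fun j => f (i.succAbove j)

/-- The conditional law, given that `m+1` independent critical geometric Galton–Watson trees
have total size `n`, of the family of trees obtained by removing the (first) largest one. -/
noncomputable def condLawRemoved (m n : ℕ) (g : Fin m → PTree) : ℝ≥0∞ :=
  (∑' f : Fin (m + 1) → PTree,
      if removeAt (istar f) f = g ∧ (∑ i, (f i).edges) = n then forestMass f else 0) /
    ∑' f : Fin (m + 1) → PTree, if (∑ i, (f i).edges) = n then forestMass f else 0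

namespace PTree

/-- Attach `a` as a new first child of the root of `b`. -/
def graft (a : PTree) : PTree → PTree
  | .node ts => .node (a :: ts)

theorem edges_graft (a b : PTree) : (graft a b).edges = a.edges + b.edges + 1 := by
  cases b with
  | node ts => simp only [graft, edges, edgesList, List.length_cons]; ring

theorem gwProb_graft (a b : PTree) : gwProb (graft a b) = 2⁻¹ * (gwProb a * gwProb b) := by
  cases b with
  | node ts => simp only [graft, gwProb, gwProbList, List.length_cons]; ring

theorem edges_leaf : (node []).edges = 0 := by simp [edges, edgesList]

theorem gwProb_leaf : gwProb (node []) = 2⁻¹ := by simp [gwProb, gwProbList]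

/-- A plane tree is a single vertex or splits at the first child of its root. -/
def splitEquiv : Unit ⊕ PTree × PTree ≃ PTree where
  toFun
    | .inl _ => .node []
    | .inr (a, b) => graft a b
  invFun
    | .node [] => .inl ()
    | .node (a :: ts) => .inr (a, .node ts)
  left_inv
    | .inl _ => rfl
    | .inr (_, .node _) => rfl
  right_inv
    | .node [] => rfl
    | .node (_ :: _) => rfl

theorem tsum_eq_leaf_add_graft (h : PTree → ℝ≥0∞) :
    ∑' t, h t = h (node []) + ∑' a, ∑' b, h (graft a b) := by
  rw [← splitEquiv.tsum_eq, ENNReal.summable.tsum_sum ENNReal.summable, tsum_fintype,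
    Finset.univ_unique, Finset.sum_singleton, ENNReal.tsum_prod']
  rfl

end PTree

/-- The expectation of `φ` at the total size of `m` independent critical geometric
Galton–Watson trees. -/
noncomputable def forestExp (m : ℕ) (φ : ℕ → ℝ≥0∞) : ℝ≥0∞ :=
  ∑' f : Fin m → PTree, forestMass f * φ (∑ i, (f i).edges)

theorem forestExp_zero (φ : ℕ → ℝ≥0∞) : forestExp 0 φ = φ 0 := by
  simp [forestExp, forestMass]

theorem forestExp_succ (m : ℕ) (φ : ℕ → ℝ≥0∞) :
    forestExp (m + 1) φ = ∑' t, gwProb t * forestExp m fun k => φ (t.edges + k) := by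
  simp only [forestExp, ← ENNReal.tsum_mul_left]
  rw [← (Fin.consEquiv fun _ => PTree).tsum_eq, ENNReal.tsum_prod']
  simp [forestMass, Fin.consEquiv, Fin.prod_univ_succ, Fin.sum_univ_succ, mul_assoc]

theorem forestExp_recursion (m : ℕ) (φ : ℕ → ℝ≥0∞) :
    forestExp (m + 1) φ =
      2⁻¹ * forestExp m φ + 2⁻¹ * forestExp (m + 2) fun k => φ (k + 1) := by
  rw [forestExp_succ, PTree.tsum_eq_leaf_add_graft, forestExp_succ (m + 1)]
  simp only [forestExp_succ m, PTree.gwProb_leaf, PTree.edges_leaf, PTree.gwProb_graft,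
    PTree.edges_graft, zero_add, ← ENNReal.tsum_mul_left]
  congr 1
  refine tsum_congr fun a => tsum_congr fun b => ?_
  simp only [mul_assoc, add_right_comm _ 1, ← add_assoc]

/-- The probability that `m` independent critical geometric Galton–Watson trees have total
size `n`. -/
noncomputable def sizeProb (m n : ℕ) : ℝ≥0∞ :=
  forestExp m fun k => if k = n then 1 else 0

theorem sizeProb_eq_tsum_ite (m n : ℕ) :
    sizeProb m n =
      ∑' f : Fin m → PTree, if (∑ i, (f i).edges) = n then forestMass f else 0 := by
  simp [sizeProb, forestExp]

theorem sizeProb_one (n : ℕ) :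
    sizeProb 1 n = ∑' t : PTree, if t.edges = n then gwProb t else 0 := by
  simp [sizeProb, forestExp_succ, forestExp_zero]

theorem forestExp_eq_tsum_sizeProb (m : ℕ) (φ : ℕ → ℝ≥0∞) :
    forestExp m φ = ∑' k, sizeProb m k * φ k := by
  simp only [sizeProb, forestExp, ← ENNReal.tsum_mul_right]
  rw [ENNReal.tsum_comm]
  refine tsum_congr fun f => ?_
  rw [tsum_eq_single (∑ i, (f i).edges)]
  · simp
  · intro k hk
    simp [hk.symm]

/-- Closed form for `sizeProb`. -/
noncomputable def sizeWeight (m : ℕ) : ℕ → ℝ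
  | 0 => 1 / 2 ^ m
  | n + 1 => m * ((2 * n + m + 1).factorial /
      ((n + 1).factorial * (n + m + 1).factorial * 2 ^ (2 * n + 2 + m)))

theorem sizeWeight_nonneg (m n : ℕ) : 0 ≤ sizeWeight m n := by
  cases n <;> simp only [sizeWeight] <;> positivity

theorem sizeWeight_pos (m n : ℕ) : 0 < sizeWeight (m + 1) n := by
  cases n <;> simp only [sizeWeight] <;> positivity

theorem sizeWeight_recursion (m n : ℕ) :
    sizeWeight (m + 1) (n + 1) =
      2⁻¹ * sizeWeight m (n + 1) + 2⁻¹ * sizeWeight (m + 2) n := by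
  cases n with
  | zero =>
    simp only [sizeWeight, mul_zero, zero_add, Nat.factorial_one, Nat.cast_one, one_mul]
    have h (k : ℕ) : (k.factorial : ℝ) ≠ 0 := by positivity
    rw [div_mul_eq_div_div, div_mul_eq_div_div, div_self (h _), div_self (h _)]
    push_cast
    field_simp
    ring
  | succ n =>
    simp only [sizeWeight]
    rw [show 2 * (n + 1) + (m + 1) + 1 = (2 * n + m + 3) + 1 by ring,
      show 2 * (n + 1) + m + 1 = 2 * n + m + 3 by ring,
      show 2 * n + (m + 2) + 1 = 2 * n + m + 3 by ring,
      show n + 1 + (m + 1) + 1 = (n + m + 2) + 1 by ring,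
      show n + 1 + m + 1 = n + m + 2 by ring,
      show n + (m + 2) + 1 = (n + m + 2) + 1 by ring,
      Nat.factorial_succ (2 * n + m + 3), Nat.factorial_succ (n + m + 2),
      Nat.factorial_succ (n + 1)]
    push_cast
    field_simp
    ring

theorem sizeProb_eq_ofReal (m n : ℕ) : sizeProb m n = ENNReal.ofReal (sizeWeight m n) := by
  induction n generalizing m with
  | zero =>
    induction m with
    | zero => simp [sizeProb, forestExp_zero, sizeWeight]
    | succ m ih =>
      have h0 : forestExp (m + 2) (fun _ => 0) = 0 := by simp [forestExp]
      rw [sizeProb, forestExp_recursion, ← sizeProb, ih]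
      simp only [Nat.add_eq_zero_iff, one_ne_zero, and_false, if_false, h0, mul_zero, add_zero,
        sizeWeight]
      rw [show (2⁻¹ : ℝ≥0∞) = ENNReal.ofReal 2⁻¹ by
        rw [ENNReal.ofReal_inv_of_pos two_pos]; simp, ← ENNReal.ofReal_mul (by positivity)]
      congr 1
      field_simp
      ring
  | succ n ihn =>
    induction m with
    | zero => simp [sizeProb, forestExp_zero, sizeWeight]
    | succ m ih =>
      rw [sizeProb, forestExp_recursion, ← sizeProb, ih]
      simp only [add_left_inj]
      rw [← sizeProb, ihn, sizeWeight_recursion, ENNReal.ofReal_add, ENNReal.ofReal_mul,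
        ENNReal.ofReal_mul, ENNReal.ofReal_inv_of_pos two_pos]
      · simp
      all_goals
        first
        | positivity
        | exact mul_nonneg (by norm_num) (sizeWeight_nonneg _ _)

theorem sizeWeight_le_mul (m n : ℕ) : sizeWeight m (n + 1) ≤ m * sizeWeight 1 (n + 1) := by
  simp only [sizeWeight, Nat.cast_one, one_mul]
  rcases m with _ | m
  · simp
  refine mul_le_mul_of_nonneg_left ?_ (by positivity)
  induction m with
  | zero => simp
  | succ m ih =>
    refine le_trans ?_ ih
    rw [div_le_div_iff₀ (by positivity) (by positivity),
      show 2 * n + (m + 1 + 1) + 1 = (2 * n + (m + 1) + 1) + 1 by ring,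
      show n + (m + 1 + 1) + 1 = (n + (m + 1) + 1) + 1 by ring,
      Nat.factorial_succ (2 * n + (m + 1) + 1), Nat.factorial_succ (n + (m + 1) + 1),
      ← add_assoc (2 * n + 2) (m + 1) 1, pow_succ _ (2 * n + 2 + (m + 1))]
    push_cast
    have hc : (2 * n + (m + 1) + 1 + 1 : ℝ) ≤ (n + (m + 1) + 1 + 1) * 2 := by
      have : (0 : ℝ) ≤ m := by positivity
      linarith
    have hk : (0 : ℝ) ≤ (2 * n + (m + 1) + 1).factorial * ((n + 1).factorial *
      (n + (m + 1) + 1).factorial * 2 ^ (2 * n + 2 + (m + 1))) := by positivity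
    nlinarith [mul_le_mul_of_nonneg_right hc hk]

/-- The probability that a simple random walk is at `0` at time `2 * k`. -/
noncomputable def returnProb (k : ℕ) : ℝ :=
  (2 * k).factorial / (k.factorial ^ 2 * 4 ^ k)

theorem returnProb_pos (k : ℕ) : 0 < returnProb k := by
  unfold returnProb; positivity

theorem returnProb_succ (k : ℕ) :
    returnProb (k + 1) = returnProb k * ((2 * k + 1) / (2 * k + 2)) := by
  simp only [returnProb]
  rw [show 2 * (k + 1) = (2 * k + 1) + 1 by ring, Nat.factorial_succ (2 * k + 1),
    Nat.factorial_succ (2 * k), Nat.factorial_succ k]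
  push_cast
  field_simp
  ring

theorem sizeWeight_one (k : ℕ) : sizeWeight 1 k = returnProb k / (2 * k + 2) := by
  cases k with
  | zero => simp [sizeWeight, returnProb]
  | succ n =>
    simp only [sizeWeight, returnProb]
    rw [show n + 1 + 1 = (n + 1) + 1 by ring, Nat.factorial_succ (n + 1),
      show 2 * n + 1 + 1 = 2 * (n + 1) by ring, show (4 : ℝ) = 2 ^ 2 by norm_num, ← pow_mul]
    push_cast
    field_simp
    ring

theorem sizeWeight_one_eq_sub (k : ℕ) :
    sizeWeight 1 k = returnProb k - returnProb (k + 1) := by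
  rw [sizeWeight_one, returnProb_succ]
  field_simp
  ring

theorem antitone_returnProb : Antitone returnProb :=
  antitone_nat_of_succ_le fun k => by
    linarith [sizeWeight_one_eq_sub k, sizeWeight_nonneg 1 k]

theorem antitone_sizeWeight_one : Antitone (sizeWeight 1) := fun a b hab => by
  rw [sizeWeight_one, sizeWeight_one]
  have := antitone_returnProb hab
  have := (returnProb_pos a).le
  gcongr

theorem sq_returnProb_mul_le_one (k : ℕ) : returnProb k ^ 2 * (2 * k + 1) ≤ 1 := by
  induction k with
  | zero => simp [returnProb]
  | succ k ih =>
    have h : ((2 * k + 1) * (2 * k + 3) / (2 * k + 2) ^ 2 : ℝ) ≤ 1 := by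
      rw [div_le_one (by positivity)]
      nlinarith
    calc returnProb (k + 1) ^ 2 * (2 * (k + 1 : ℕ) + 1)
        = returnProb k ^ 2 * (2 * k + 1) * ((2 * k + 1) * (2 * k + 3) / (2 * k + 2) ^ 2) := by
          rw [returnProb_succ]
          push_cast
          field_simp
          ring
      _ ≤ 1 := mul_le_one₀ ih (by positivity) h

theorem returnProb_le (k : ℕ) : returnProb k ≤ 1 / Real.sqrt (2 * k + 1) := by
  rw [le_div_iff₀ (by positivity)]
  have h := sq_returnProb_mul_le_one k
  rw [← Real.sq_sqrt (show (0 : ℝ) ≤ 2 * k + 1 by positivity), ← mul_pow] at h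
  exact (sq_le_one_iff₀ (by have := returnProb_pos k; positivity)).1 h

theorem tendsto_returnProb : Tendsto returnProb atTop (nhds 0) := by
  refine squeeze_zero (fun k => (returnProb_pos k).le) returnProb_le ?_
  simp only [one_div]
  refine tendsto_inv_atTop_zero.comp (Real.tendsto_sqrt_atTop.comp ?_)
  exact tendsto_atTop_add_const_right _ _ (tendsto_natCast_atTop_atTop.const_mul_atTop two_pos)

theorem hasSum_sizeWeight_one_tail (K : ℕ) :
    HasSum (fun k => sizeWeight 1 (k + K)) (returnProb K) := by
  rw [hasSum_iff_tendsto_nat_of_nonneg fun _ => sizeWeight_nonneg _ _]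
  have h (n : ℕ) : ∑ k ∈ Finset.range n, sizeWeight 1 (k + K) =
      returnProb K - returnProb (n + K) := by
    induction n with
    | zero => simp
    | succ n ih =>
      rw [Finset.sum_range_succ, ih, sizeWeight_one_eq_sub, show n + 1 + K = n + K + 1 by ring]
      ring
  simp only [h]
  simpa using ((tendsto_add_atTop_iff_nat K).2 tendsto_returnProb).const_sub (returnProb K)

theorem tsum_sizeProb_one_tail (K : ℕ) :
    ∑' k, sizeProb 1 (k + K) = ENNReal.ofReal (returnProb K) := by
  have h := hasSum_sizeWeight_one_tail K
  simp only [sizeProb_eq_ofReal]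
  rw [← ENNReal.ofReal_tsum_of_nonneg (fun _ => sizeWeight_nonneg _ _) h.summable, h.tsum_eq]

theorem tsum_forestMass (m : ℕ) : ∑' f : Fin m → PTree, forestMass f = 1 := by
  have key (m : ℕ) : forestExp m (fun _ => 1) = 1 ∧ forestExp (m + 1) (fun _ => 1) = 1 := by
    induction m with
    | zero =>
      refine ⟨forestExp_zero _, ?_⟩
      have := tsum_sizeProb_one_tail 0
      simp_all [forestExp_eq_tsum_sizeProb, returnProb]
    | succ m ih =>
      refine ⟨ih.2, ?_⟩
      have h := forestExp_recursion m fun _ => 1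
      rw [ih.1, ih.2, mul_one] at h
      have h2 : (2⁻¹ : ℝ≥0∞) + 2⁻¹ = 2⁻¹ + 2⁻¹ * forestExp (m + 2) fun _ => 1 := by
        rw [← h, ENNReal.inv_two_add_inv_two]
      have h3 := (ENNReal.add_right_inj (by simp)).1 h2
      rw [← ENNReal.mul_right_inj (a := 2⁻¹) (by simp) (by simp), ← h3, mul_one]
  simpa [forestExp] using (key m).1

theorem tsum_forestMass_large_le (m K : ℕ) (hK : 0 < K) :
    (∑' f : Fin m → PTree, if K ≤ ∑ i, (f i).edges then forestMass f else 0) ≤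
      m * ENNReal.ofReal (returnProb K) := by
  calc (∑' f : Fin m → PTree, if K ≤ ∑ i, (f i).edges then forestMass f else 0)
      = forestExp m fun k => if K ≤ k then 1 else 0 := by simp [forestExp]
    _ = ∑' k, sizeProb m (k + K) := by
      rw [forestExp_eq_tsum_sizeProb,
        ← Summable.sum_add_tsum_nat_add' (k := K) ENNReal.summable, Finset.sum_eq_zero, zero_add]
      · simp
      · intro k hk
        simp [Finset.mem_range.1 hk]
    _ ≤ ∑' k, m * sizeProb 1 (k + K) := by
      refine ENNReal.tsum_le_tsum fun k => ?_
      obtain ⟨j, hj⟩ : ∃ j, k + K = j + 1 := ⟨k + K - 1, by omega⟩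
      rw [hj, sizeProb_eq_ofReal, sizeProb_eq_ofReal, ← ENNReal.ofReal_natCast,
        ← ENNReal.ofReal_mul (by positivity)]
      exact ENNReal.ofReal_le_ofReal (sizeWeight_le_mul m j)
    _ = m * ENNReal.ofReal (returnProb K) := by
      rw [ENNReal.tsum_mul_left, tsum_sizeProb_one_tail]

theorem sizeProb_ne_top (m n : ℕ) : sizeProb m n ≠ ∞ := by
  simp [sizeProb_eq_ofReal]

theorem sizeProb_succ_ne_zero (m n : ℕ) : sizeProb (m + 1) n ≠ 0 := by
  simp [sizeProb_eq_ofReal, sizeWeight_pos]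

theorem istar_insertNth {m : ℕ} (i : Fin (m + 1)) (t : PTree) (g : Fin m → PTree)
    (h : ∀ j, (g j).edges < t.edges) : istar (i.insertNth (α := fun _ => PTree) t g) = i := by
  have hs : (Finset.univ.filter fun k => ∀ j,
      (i.insertNth (α := fun _ => PTree) t g j).edges ≤
        (i.insertNth (α := fun _ => PTree) t g k).edges) = {i} := by
    ext k
    simp only [Finset.mem_filter, Finset.mem_univ, true_and, Finset.mem_singleton]
    constructor
    · intro hk
      by_contra hne
      obtain ⟨j, rfl⟩ := Fin.exists_succAbove_eq hne
      have := hk i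
      simp only [Fin.insertNth_apply_same, Fin.insertNth_apply_succAbove] at this
      exact absurd (h j) (not_lt.2 this)
    · rintro rfl j
      rcases Fin.eq_self_or_eq_succAbove k j with rfl | ⟨j, rfl⟩
      · rfl
      · simpa using (h j).le
  simp only [istar, hs, Finset.min'_singleton]

theorem mul_forestMass_le_tsum_removeAt {m n : ℕ} (g : Fin m → PTree)
    (h : 2 * ∑ i, (g i).edges < n) :
    (m + 1 : ℕ) * sizeProb 1 (n - ∑ i, (g i).edges) * forestMass g ≤
      ∑' f : Fin (m + 1) → PTree,
        if removeAt (istar f) f = g ∧ (∑ i, (f i).edges) = n then forestMass f else 0 := by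
  set s := ∑ i, (g i).edges
  let ins : Fin (m + 1) × {t : PTree // t.edges = n - s} → Fin (m + 1) → PTree :=
    fun p => p.1.insertNth (α := fun _ => PTree) p.2.1 g
  have hstar (p) : istar (ins p) = p.1 := by
    refine istar_insertNth _ _ _ fun j => ?_
    have : (g j).edges ≤ s :=
      Finset.single_le_sum (f := fun i => (g i).edges) (fun _ _ => Nat.zero_le _)
        (Finset.mem_univ j)
    have := p.2.2
    omega
  have hinj : Function.Injective ins := by
    intro p q hpq
    have h1 : p.1 = q.1 := by rw [← hstar p, ← hstar q, hpq]
    have h2 : (p.2 : PTree) = q.2 := by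
      have := congrFun hpq p.1
      simp only [ins] at this
      rw [Fin.insertNth_apply_same, h1, Fin.insertNth_apply_same] at this
      exact this
    exact Prod.ext h1 (Subtype.ext h2)
  refine le_trans (le_of_eq ?_) (ENNReal.tsum_comp_le_tsum_of_injective hinj _)
  have hval (p) : (if removeAt (istar (ins p)) (ins p) = g ∧ (∑ i, (ins p i).edges) = n
      then forestMass (ins p) else 0) = gwProb p.2 * forestMass g := by
    rw [if_pos]
    · simp [forestMass, ins, Fin.prod_univ_succAbove _ p.1]
    · rw [hstar]
      refine ⟨funext fun j => by simp [removeAt, ins], ?_⟩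
      rw [Fin.sum_univ_succAbove _ p.1]
      have := p.2.2
      simp only [ins, Fin.insertNth_apply_same, Fin.insertNth_apply_succAbove]
      omega
  simp only [hval]
  rw [ENNReal.tsum_mul_right, ENNReal.tsum_prod', sizeProb_one,
    tsum_fintype (L := .unconditional (Fin (m + 1)))]
  simp only [Finset.sum_const, Finset.card_univ, Fintype.card_fin, nsmul_eq_mul]
  congr 2
  refine Eq.trans (tsum_congr fun t => ?_)
    (tsum_subtype {t : PTree | t.edges = n - s} gwProb).symm
  simp [Set.indicator_apply]

theorem forestMass_le_condLawRemoved {m n : ℕ} (g : Fin m → PTree)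
    (h : 2 * ∑ i, (g i).edges < n) : forestMass g ≤ condLawRemoved m n g := by
  rw [condLawRemoved, ← sizeProb_eq_tsum_ite,
    ENNReal.le_div_iff_mul_le (.inl (sizeProb_succ_ne_zero _ _)) (.inl (sizeProb_ne_top _ _))]
  refine le_trans ?_ (mul_forestMass_le_tsum_removeAt g h)
  rw [mul_comm]
  gcongr
  obtain ⟨j, rfl⟩ : ∃ j, n = j + 1 := ⟨n - 1, by omega⟩
  rw [sizeProb_eq_ofReal, sizeProb_eq_ofReal, ← ENNReal.ofReal_natCast,
    ← ENNReal.ofReal_mul (by positivity)]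
  refine ENNReal.ofReal_le_ofReal ((sizeWeight_le_mul _ _).trans ?_)
  gcongr
  exact antitone_sizeWeight_one (Nat.sub_le _ _)

theorem tsum_condLawRemoved (m n : ℕ) : ∑' g, condLawRemoved m n g = 1 := by
  simp only [condLawRemoved, div_eq_mul_inv]
  rw [ENNReal.tsum_mul_right, ENNReal.tsum_comm]
  have h (f : Fin (m + 1) → PTree) :
      (∑' g, if removeAt (istar f) f = g ∧ (∑ i, (f i).edges) = n then forestMass f else 0) =
        if (∑ i, (f i).edges) = n then forestMass f else 0 := by
    rw [tsum_eq_single (removeAt (istar f) f)]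
    · simp
    · intro g hg
      simp [hg.symm]
  simp only [h, ← sizeProb_eq_tsum_ite]
  exact ENNReal.mul_inv_cancel (sizeProb_succ_ne_zero _ _) (sizeProb_ne_top _ _)

theorem half_tsum_abs_sub_le {α : Type*} (P Q R : α → ℝ≥0∞) (hP : ∑' a, P a = 1)
    (hQ : ∑' a, Q a = 1) (hR : ∑' a, R a ≠ ∞) (h : ∀ a, P a ≤ Q a + R a) :
    (1 / 2 : ℝ) * ∑' a, |(Q a).toReal - (P a).toReal| ≤ (∑' a, R a).toReal := by
  have fin {F : α → ℝ≥0∞} (hF : ∑' a, F a ≠ ∞) :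
      HasSum (fun a => (F a).toReal) (∑' a, F a).toReal := by
    rw [ENNReal.tsum_toReal_eq fun a => ENNReal.ne_top_of_tsum_ne_top hF a]
    exact (ENNReal.summable_toReal hF).hasSum
  have sP := fin (F := P) (by simp [hP])
  have sQ := fin (F := Q) (by simp [hQ])
  have sR := fin hR
  have sB := (sQ.sub sP).add (sR.mul_left 2)
  have hle (a : α) : |(Q a).toReal - (P a).toReal| ≤
      (Q a).toReal - (P a).toReal + 2 * (R a).toReal := by
    have hQa : Q a ≠ ∞ := ENNReal.ne_top_of_tsum_ne_top (by simp [hQ]) a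
    have hRa : R a ≠ ∞ := ENNReal.ne_top_of_tsum_ne_top hR a
    have h1 := ENNReal.toReal_mono (ENNReal.add_ne_top.2 ⟨hQa, hRa⟩) (h a)
    rw [ENNReal.toReal_add hQa hRa] at h1
    have h2 : 0 ≤ (R a).toReal := ENNReal.toReal_nonneg
    rw [abs_le]
    constructor <;> linarith
  have hsum := (Summable.of_nonneg_of_le (fun _ => abs_nonneg _) hle
    sB.summable).tsum_le_tsum hle sB.summable
  rw [sB.tsum_eq, hP, hQ] at hsum
  linarith

theorem half_tsum_abs_condLawRemoved_sub_le (m n : ℕ) (hn : 0 < n) :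
    (1 / 2 : ℝ) * ∑' g : Fin m → PTree,
      |(condLawRemoved m n g).toReal - (forestMass g).toReal| ≤ (m + 1) / Real.sqrt n := by
  set K := (n + 1) / 2
  have hbound := tsum_forestMass_large_le m K (by omega)
  have htop : (m : ℝ≥0∞) * ENNReal.ofReal (returnProb K) ≠ ∞ :=
    ENNReal.mul_ne_top (by simp) (by simp)
  refine (half_tsum_abs_sub_le _ _
    (fun g => if K ≤ ∑ i, (g i).edges then forestMass g else 0)
    (tsum_forestMass m) (tsum_condLawRemoved m n) (ne_top_of_le_ne_top htop hbound) ?_).trans ?_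
  · intro g
    split_ifs with hg
    · exact le_add_self
    · rw [add_zero]
      exact forestMass_le_condLawRemoved g (by omega)
  · refine (ENNReal.toReal_mono htop hbound).trans ?_
    rw [ENNReal.toReal_mul, ENNReal.toReal_natCast,
      ENNReal.toReal_ofReal (returnProb_pos K).le]
    have hK : (n : ℝ) ≤ 2 * K + 1 := by
      have : n ≤ 2 * K + 1 := by omega
      exact_mod_cast this
    have hn' : (0 : ℝ) < Real.sqrt n := by positivity
    calc (m : ℝ) * returnProb K ≤ (m + 1) * (1 / Real.sqrt n) := by
          have := (returnProb_pos K).le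
          gcongr
          · linarith
          · exact (returnProb_le K).trans (by gcongr)
      _ = (m + 1) / Real.sqrt n := mul_one_div _ _

/-- If the number `σ_n (= σ n + 1)` of trees satisfies `σ_n = o(√n)`, the total variation
distance between the conditional law (given total size `n`) of the forest with its largest tree
removed and the law of `σ_n - 1` independent critical geometric Galton–Watson trees tends
to `0`. -/
theorem remove_big_tree_tv (σ : ℕ → ℕ)
    (hσ : Tendsto (fun n => ((σ n : ℝ) + 1) / Real.sqrt n) atTop (nhds 0)) :
    Tendsto (fun n => (1 / 2 : ℝ) *
        ∑' g : Fin (σ n) → PTree,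
          |(condLawRemoved (σ n) n g).toReal - (forestMass g).toReal|)
      atTop (nhds 0) := by
  refine tendsto_of_tendsto_of_tendsto_of_le_of_le' tendsto_const_nhds hσ
    (Eventually.of_forall fun n => ?_) ?_
  · exact mul_nonneg (by norm_num) (tsum_nonneg fun _ => abs_nonneg _)
  · filter_upwards [eventually_gt_atTop 0] with n hn
    exact half_tsum_abs_condLawRemoved_sub_le (σ n) n hn
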